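/- arXiv:2605.22451 — 2 statements merged into one kernel-verified Lean document; each statement's English description precedes it below -/
import Mathlib

section
/- Let I be a finite nonempty index set and for each i ∈ I let fᵢ : ℝⁿ → ℝ be continuous and positive-valued with epigraph Lᵢ. Let K ⊆ ℝⁿ × ℝ be a nonempty closed set containing a point with nonpositive last coordinate and with K ∩ Lᵢ = ∅ for all i ∈ I. Let f_min(x) := min{fᵢ(x) : i ∈ I} and L := ∪_{i∈I} Lᵢ (the epigraph of f_min). Then for every x ∈ ℝⁿ: min{Gᵢ⁻(x) : i ∈ I} ≤ G_min⁻(x) ≤ G_min⁺(x) ≤ min{Gᵢ⁺(x) : i ∈ I}, where Gᵢ± are the upper/lower equidistant functions associated with K and Lᵢ, and G_min± are those associated with K and L. -/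
open Metric Set

noncomputable section

/-- `ℝⁿ × ℝ` with the Euclidean (ℓ²) metric. -/
abbrev EucProd (n : ℕ) := WithLp 2 (EuclideanSpace ℝ (Fin n) × ℝ)

/-- The point of `ℝⁿ × ℝ` with first component `x` and last coordinate `y`. -/
def pt {n : ℕ} (x : EuclideanSpace ℝ (Fin n)) (y : ℝ) : EucProd n :=
  (WithLp.equiv 2 (EuclideanSpace ℝ (Fin n) × ℝ)).symm (x, y)

/-- The epigraph of `f : ℝⁿ → ℝ`, viewed as a subset of `ℝⁿ × ℝ`. -/
def epigraph {n : ℕ} (f : EuclideanSpace ℝ (Fin n) → ℝ) : Set (EucProd n) :=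
  {p | f ((WithLp.equiv 2 (EuclideanSpace ℝ (Fin n) × ℝ)) p).1 ≤
      ((WithLp.equiv 2 (EuclideanSpace ℝ (Fin n) × ℝ)) p).2}

/-- The upper equidistant function `G⁺` associated with the focal sets `K` and `L`:
`G⁺(x) = sup {y | d((x,y),K) = d((x,y),L)}`. -/
def Gplus {n : ℕ} (K L : Set (EucProd n)) (x : EuclideanSpace ℝ (Fin n)) : ℝ :=
  sSup {y : ℝ | Metric.infDist (pt x y) K = Metric.infDist (pt x y) L}

/-- The lower equidistant function `G⁻` associated with the focal sets `K` and `L`: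
`G⁻(x) = inf {y | d((x,y),K) = d((x,y),L)}`. -/
def Gminus {n : ℕ} (K L : Set (EucProd n)) (x : EuclideanSpace ℝ (Fin n)) : ℝ :=
  sInf {y : ℝ | Metric.infDist (pt x y) K = Metric.infDist (pt x y) L}

theorem pt_cont {n : ℕ} (x : EuclideanSpace ℝ (Fin n)) : Continuous (fun y : ℝ => pt x y) := by
  unfold pt
  exact (WithLp.prod_continuous_toLp 2 _ _).comp (by fun_prop : Continuous fun y : ℝ => (x, y))

theorem dist_pt {n : ℕ} (x : EuclideanSpace ℝ (Fin n)) (y : ℝ) (q : EucProd n) :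
    dist (pt x y) q = √(dist x q.fst ^ 2 + dist y q.snd ^ 2) := by
  rw [WithLp.prod_dist_eq_of_L2]
  rfl

theorem low_lemma {n : ℕ} (f : EuclideanSpace ℝ (Fin n) → ℝ) (hf : Continuous f)
    (hfpos : ∀ x, 0 < f x) (K : Set (EucProd n))
    (x₀ : EuclideanSpace ℝ (Fin n)) (y₀ : ℝ) (hx₀ : pt x₀ y₀ ∈ K) (hy₀ : y₀ ≤ 0)
    (x : EuclideanSpace ℝ (Fin n)) :
    ∀ᶠ y in Filter.atBot, infDist (pt x y) K < infDist (pt x y) (epigraph f) := by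
  set r := dist x x₀ with hr
  have hr0 : 0 ≤ r := dist_nonneg
  obtain ⟨z, -, hz⟩ := (isCompact_closedBall x (r + 1)).exists_isMinOn
    ⟨x, mem_closedBall_self (by positivity)⟩ hf.continuousOn
  have hm := hfpos z
  set m := f z
  filter_upwards [Filter.eventually_le_atBot y₀,
    Filter.eventually_le_atBot (-((r + 1) ^ 2 / (2 * m)))] with y h1 h2
  have h3 : (r + 1) ^ 2 ≤ 2 * m * (-y) := by
    have : (r + 1) ^ 2 / (2 * m) ≤ -y := by linarith
    rw [div_le_iff₀ (by positivity)] at this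
    linarith
  have hK : infDist (pt x y) K ≤ √(r ^ 2 + y ^ 2) := by
    refine (infDist_le_dist_of_mem hx₀).trans ?_
    rw [dist_pt]
    apply Real.sqrt_le_sqrt
    have : dist y y₀ ^ 2 ≤ y ^ 2 := by
      rw [Real.dist_eq, sq_abs]
      nlinarith
    have e1 : (pt x₀ y₀).fst = x₀ := rfl
    have e2 : (pt x₀ y₀).snd = y₀ := rfl
    rw [e1, e2]
    linarith
  have hlt : √(r ^ 2 + y ^ 2) < √((r + 1) ^ 2 + y ^ 2) :=
    Real.sqrt_lt_sqrt (by positivity) (by nlinarith)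
  refine (hK.trans_lt hlt).trans_le ?_
  refine (le_infDist ⟨pt x (f x), ?_⟩).2 ?_
  · exact le_refl (f x)
  intro q hq
  have hq' : f q.fst ≤ q.snd := hq
  rw [dist_pt]
  apply Real.sqrt_le_sqrt
  rw [Real.dist_eq, sq_abs]
  have hq0 := hfpos q.fst
  by_cases hd : dist x q.fst ≤ r + 1
  · have : m ≤ f q.fst := hz (by rw [mem_closedBall, dist_comm]; exact hd)
    have h4 : m ≤ q.snd := this.trans hq'
    have : (m - y) ^ 2 ≤ (y - q.snd) ^ 2 := by nlinarith
    nlinarith [sq_nonneg (dist x q.fst)]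
  · push Not at hd
    nlinarith

theorem ivt_lemma {n : ℕ} (K L : Set (EucProd n)) (x : EuclideanSpace ℝ (Fin n)) (a b : ℝ)
    (hab : a ≤ b) (ha : infDist (pt x a) K ≤ infDist (pt x a) L)
    (hb : infDist (pt x b) L ≤ infDist (pt x b) K) :
    ∃ c, a ≤ c ∧ infDist (pt x c) K = infDist (pt x c) L := by
  have hc : ∀ S : Set (EucProd n), Continuous (fun y : ℝ => infDist (pt x y) S) := fun S =>
    (continuous_infDist_pt S).comp (pt_cont x)
  obtain ⟨c, hc, h⟩ := isPreconnected_Icc.intermediate_value₂ (left_mem_Icc.2 hab)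
    (right_mem_Icc.2 hab) (hc K).continuousOn (hc L).continuousOn ha hb
  exact ⟨c, hc.1, h⟩

theorem stmt6 {n : ℕ} (I : Type) [Fintype I] [Nonempty I]
    (f : I → EuclideanSpace ℝ (Fin n) → ℝ)
    (hf : ∀ i, Continuous (f i)) (hfpos : ∀ i x, 0 < f i x)
    (L : I → Set (EucProd n)) (hL : ∀ i, L i = epigraph (f i))
    (K : Set (EucProd n)) (hKcl : IsClosed K) (hKne : K.Nonempty)
    (x₀ : EuclideanSpace ℝ (Fin n)) (y₀ : ℝ) (hx₀ : pt x₀ y₀ ∈ K) (hy₀ : y₀ ≤ 0)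
    (hdisj : ∀ i, K ∩ L i = ∅)
    (fmin : EuclideanSpace ℝ (Fin n) → ℝ)
    (hfmin : ∀ x, fmin x = Finset.univ.inf' Finset.univ_nonempty (fun i => f i x))
    (Lmin : Set (EucProd n)) (hLmin : Lmin = ⋃ i, L i)
    (x : EuclideanSpace ℝ (Fin n)) :
    Finset.univ.inf' Finset.univ_nonempty (fun i => Gminus K (L i) x) ≤
        Gminus K Lmin x ∧
      Gminus K Lmin x ≤ Gplus K Lmin x ∧
      Gplus K Lmin x ≤ Finset.univ.inf' Finset.univ_nonempty (fun i => Gplus K (L i) x) := by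
  have hne : ∀ i, (L i).Nonempty := fun i => ⟨pt x (f i x), by
    rw [hL]; exact le_refl (f i x)⟩
  have hin : ∀ i y, f i x ≤ y → infDist (pt x y) (L i) = 0 := fun i y h =>
    infDist_zero_of_mem (by rw [hL]; exact h)
  have hKpos : ∀ i y, f i x ≤ y → 0 < infDist (pt x y) K := fun i y h => by
    refine (hKcl.notMem_iff_infDist_pos hKne).1 fun hk => ?_
    have : pt x y ∈ K ∩ L i := ⟨hk, by rw [hL]; exact h⟩
    rw [hdisj] at this
    exact this
  have hle : ∀ i p, infDist p Lmin ≤ infDist p (L i) := fun i p =>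
    infDist_le_infDist_of_subset (hLmin ▸ subset_iUnion L i) (hne i)
  have hex : ∀ p, ∃ i, infDist p Lmin = infDist p (L i) := fun p => by
    obtain ⟨i, -, hi⟩ := Finset.exists_mem_eq_inf' (Finset.univ_nonempty (α := I))
      (fun i => infDist p (L i))
    refine ⟨i, le_antisymm (hle i p) ?_⟩
    have hn : Lmin.Nonempty := (hne i).mono (hLmin ▸ subset_iUnion L i)
    refine (le_infDist hn).2 fun q hq => ?_
    rw [hLmin] at hq
    obtain ⟨j, hj⟩ := mem_iUnion.1 hq
    rw [← hi]
    exact (Finset.inf'_le _ (Finset.mem_univ j)).trans (infDist_le_dist_of_mem hj)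
  have hlow : ∀ i, ∀ᶠ y in Filter.atBot, infDist (pt x y) K < infDist (pt x y) (L i) := fun i => by
    rw [hL]
    exact low_lemma (f i) (hf i) (hfpos i) K x₀ y₀ hx₀ hy₀ x
  obtain ⟨M, hM⟩ := Filter.eventually_atBot.1 (Filter.eventually_all.2 hlow)
  have hbelow : ∀ i, BddBelow {y : ℝ | infDist (pt x y) K = infDist (pt x y) (L i)} := fun i =>
    ⟨M, fun y hy => by
      by_contra h
      exact (hM y (not_le.1 h).le i).ne hy⟩
  have habove : ∀ i, BddAbove {y : ℝ | infDist (pt x y) K = infDist (pt x y) (L i)} := fun i =>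
    ⟨f i x, fun y hy => by
      by_contra h
      have h' := (not_le.1 h).le
      have hy' : infDist (pt x y) K = infDist (pt x y) (L i) := hy
      rw [hin i y h'] at hy'
      exact (hKpos i y h').ne' hy'⟩
  have hlt : ∀ i y, infDist (pt x y) K = infDist (pt x y) Lmin → y < f i x := fun i y hy => by
    by_contra h
    have h' := not_lt.1 h
    have h1 := hle i (pt x y)
    rw [hin i y h', ← hy] at h1
    exact (hKpos i y h').not_ge h1
  obtain ⟨i₀⟩ := ‹Nonempty I›
  have hbelowm : BddBelow {y : ℝ | infDist (pt x y) K = infDist (pt x y) Lmin} :=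
    ⟨M, fun y hy => by
      by_contra h
      obtain ⟨i, hi⟩ := hex (pt x y)
      exact (hM y (not_le.1 h).le i).ne (hi ▸ hy)⟩
  have habovem : BddAbove {y : ℝ | infDist (pt x y) K = infDist (pt x y) Lmin} :=
    ⟨f i₀ x, fun y hy => (hlt i₀ y hy).le⟩
  have hnem : {y : ℝ | infDist (pt x y) K = infDist (pt x y) Lmin}.Nonempty := by
    obtain ⟨i, hi⟩ := hex (pt x (min M (f i₀ x)))
    obtain ⟨c, -, hc⟩ := ivt_lemma K Lmin x (min M (f i₀ x)) (f i₀ x) (min_le_right _ _)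
      (by rw [hi]; exact (hM _ (min_le_left _ _) i).le)
      ((hle i₀ _).trans (by rw [hin i₀ _ le_rfl]; exact infDist_nonneg))
    exact ⟨c, hc⟩
  refine ⟨?_, ?_, ?_⟩
  · refine le_csInf hnem fun y hy => ?_
    obtain ⟨i, hi⟩ := hex (pt x y)
    refine (Finset.inf'_le _ (Finset.mem_univ i)).trans (csInf_le (hbelow i) ?_)
    have hy' : infDist (pt x y) K = infDist (pt x y) Lmin := hy
    exact hy'.trans hi
  · exact csInf_le_csSup hnem hbelowm habovem
  · refine Finset.le_inf' _ _ fun i _ => csSup_le hnem fun y hy => ?_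
    have hy' : infDist (pt x y) K = infDist (pt x y) Lmin := hy
    obtain ⟨c, hyc, hc⟩ := ivt_lemma K (L i) x y (f i x) (hlt i y hy).le
      (by rw [hy']; exact hle i _) (by rw [hin i _ le_rfl]; exact infDist_nonneg)
    exact hyc.trans (le_csSup (habove i) hc)

end
end

section
/- Let K ⊆ ℝⁿ × ℝ be a convex compact set containing a point (x₀,y₀) with y₀ ≤ 0. Then the following are equivalent: (a) for every positive-valued continuous convex function f : ℝⁿ → ℝ whose epigraph L is disjoint from K, one has G⁻(x) = G⁺(x) for all x ∈ ℝⁿ; (b) there exist no point x₁ ∈ ℝⁿ and real numbers 0 < y₁ < y₂ such that (x₁,y₁) ∉ K and (x₁,y₂) ∈ K. -/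
open Metric Set

noncomputable section

theorem sq_dist_pt {n : ℕ} (x u : EuclideanSpace ℝ (Fin n)) (y v : ℝ) :
    dist (pt x y) (pt u v) ^ 2 = dist x u ^ 2 + (y - v) ^ 2 := by
  rw [WithLp.prod_dist_eq_of_L2, Real.sq_sqrt (by positivity)]
  simp [pt, Real.dist_eq]

theorem exists_pt {n : ℕ} (p : EucProd n) : ∃ u v, p = pt u v :=
  ⟨p.fst, p.snd, rfl⟩

theorem mem_epi {n : ℕ} (f : EuclideanSpace ℝ (Fin n) → ℝ) (x : EuclideanSpace ℝ (Fin n)) (y : ℝ) :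
    pt x y ∈ epigraph f ↔ f x ≤ y := Iff.rfl

theorem continuous_pt {n : ℕ} : Continuous
    (fun q : EuclideanSpace ℝ (Fin n) × ℝ => pt q.1 q.2) := by
  unfold pt
  exact WithLp.prod_continuous_toLp 2 _ _

theorem continuous_pt_right {n : ℕ} (x : EuclideanSpace ℝ (Fin n)) : Continuous (pt x) :=
  continuous_pt.comp (Continuous.prodMk_right x)

theorem continuous_fst' {n : ℕ} : Continuous (fun p : EucProd n => p.fst) :=
  continuous_fst.comp (WithLp.prod_continuous_ofLp 2 _ _)

theorem continuous_snd' {n : ℕ} : Continuous (fun p : EucProd n => p.snd) :=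
  continuous_snd.comp (WithLp.prod_continuous_ofLp 2 _ _)

theorem isClosed_epi {n : ℕ} (f : EuclideanSpace ℝ (Fin n) → ℝ) (hf : Continuous f) :
    IsClosed (epigraph f) :=
  isClosed_le (hf.comp continuous_fst') continuous_snd'

theorem key_step {n : ℕ} (K : Set (EucProd n)) (hKcp : IsCompact K) (hne : K.Nonempty)
    (hb : ∀ (u : EuclideanSpace ℝ (Fin n)) (a b : ℝ), 0 ≤ a → a < b → pt u b ∈ K → pt u a ∈ K)
    (f : EuclideanSpace ℝ (Fin n) → ℝ) (hpos : ∀ x, 0 < f x) (hf : Continuous f)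
    (hc : ConvexOn ℝ Set.univ f) (hd : K ∩ epigraph f = ∅)
    (x : EuclideanSpace ℝ (Fin n)) (a b : ℝ) (hab : a < b)
    (h : infDist (pt x b) K ≤ infDist (pt x b) (epigraph f)) :
    infDist (pt x a) K < infDist (pt x a) (epigraph f) := by
  have hLne : (epigraph f).Nonempty := ⟨pt x (f x), le_refl (f x)⟩
  have hLcl := isClosed_epi f hf
  -- negative heights
  have neg : ∀ a b : ℝ, a < b → b ≤ 0 →
      infDist (pt x b) K ≤ infDist (pt x b) (epigraph f) →
      infDist (pt x a) K < infDist (pt x a) (epigraph f) := by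
    intro a b hab hb0 h
    obtain ⟨k, hk, hkd⟩ := hKcp.exists_infDist_eq_dist hne (pt x b)
    obtain ⟨l, hl, hld⟩ := hLcl.exists_infDist_eq_dist hLne (pt x a)
    obtain ⟨u, v, rfl⟩ := exists_pt k
    obtain ⟨w, z, rfl⟩ := exists_pt l
    have hz : 0 < z := lt_of_lt_of_le (hpos w) hl
    have hv : v ≤ 0 := by
      by_contra hv
      push Not at hv
      have h1 := infDist_le_dist_of_mem (x := pt x b) (hb u 0 v le_rfl hv hk)
      rw [hkd] at h1
      have h2 := pow_le_pow_left₀ dist_nonneg h1 2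
      rw [sq_dist_pt, sq_dist_pt] at h2
      nlinarith
    have h1 : dist (pt x b) (pt u v) ≤ dist (pt x b) (pt w z) := by
      rw [← hkd]; exact h.trans (infDist_le_dist_of_mem hl)
    have h2 := pow_le_pow_left₀ dist_nonneg h1 2
    rw [hld]
    refine lt_of_le_of_lt (infDist_le_dist_of_mem hk) ?_
    refine lt_of_pow_lt_pow_left₀ 2 dist_nonneg ?_
    rw [sq_dist_pt, sq_dist_pt] at *
    nlinarith [mul_pos (sub_pos.2 hab) (sub_pos.2 (lt_of_le_of_lt hv hz))]
  -- nonnegative heights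
  have nonneg : ∀ a b : ℝ, a < b → 0 ≤ a →
      infDist (pt x b) K ≤ infDist (pt x b) (epigraph f) →
      infDist (pt x a) K < infDist (pt x a) (epigraph f) := by
    intro a b hab ha0 h
    have hK : infDist (pt x a) K ≤ infDist (pt x b) K := by
      obtain ⟨k, hk, hkd⟩ := hKcp.exists_infDist_eq_dist hne (pt x b)
      obtain ⟨u, v, rfl⟩ := exists_pt k
      rw [hkd]
      rcases le_or_gt v a with hva | hva
      · refine (infDist_le_dist_of_mem hk).trans ?_
        refine le_of_sq_le_sq ?_ dist_nonneg
        rw [sq_dist_pt, sq_dist_pt]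
        nlinarith
      · refine (infDist_le_dist_of_mem (hb u a v ha0 hva hk)).trans ?_
        refine le_of_sq_le_sq ?_ dist_nonneg
        rw [sq_dist_pt, sq_dist_pt]
        nlinarith [sq_nonneg (b - v)]
    refine lt_of_le_of_lt (hK.trans h) ?_
    obtain ⟨l, hl, hld⟩ := hLcl.exists_infDist_eq_dist hLne (pt x a)
    obtain ⟨w, z, rfl⟩ := exists_pt l
    rw [mem_epi] at hl
    rw [hld]
    have fin : ∀ w' z', f w' ≤ z' → dist x w' ^ 2 + (b - z') ^ 2 < dist x w ^ 2 + (a - z) ^ 2 →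
        infDist (pt x b) (epigraph f) < dist (pt x a) (pt w z) := by
      intro w' z' h1 h2
      refine lt_of_le_of_lt (infDist_le_dist_of_mem ((mem_epi f w' z').2 h1)) ?_
      refine lt_of_pow_lt_pow_left₀ 2 dist_nonneg ?_
      rwa [sq_dist_pt, sq_dist_pt]
    rcases le_or_gt b z with hbz | hbz
    · exact fin w z hl (by nlinarith)
    rcases eq_or_ne x w with rfl | hxw
    · exfalso
      have hbL : pt x b ∈ epigraph f := (mem_epi f x b).2 (hl.trans hbz.le)
      rw [infDist_zero_of_mem hbL] at h
      have : pt x b ∈ K := (hKcp.isClosed.mem_iff_infDist_zero hne).2 (le_antisymm h infDist_nonneg)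
      exact (Set.eq_empty_iff_forall_notMem.1 hd _) ⟨this, hbL⟩
    · have hden : 0 < |f x - z| + (b - z) := by
        have := abs_nonneg (f x - z); linarith
      set t : ℝ := (b - z) / (|f x - z| + (b - z)) with ht
      have ht0 : 0 < t := div_pos (by linarith) hden
      have ht1 : t ≤ 1 := (div_le_one hden).2 (by have := abs_nonneg (f x - z); linarith)
      have hte : t * (|f x - z| + (b - z)) = b - z := div_mul_cancel₀ _ hden.ne'
      refine fin ((1 - t) • w + t • x) b ?_ ?_
      · have := hc.2 (mem_univ w) (mem_univ x) (by linarith : 0 ≤ 1 - t) ht0.le (by ring)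
        simp only [smul_eq_mul] at this
        nlinarith [mul_le_mul_of_nonneg_left (le_abs_self (f x - z)) ht0.le,
          mul_le_mul_of_nonneg_left hl (by linarith : 0 ≤ 1 - t), mul_pos ht0 (sub_pos.2 hbz)]
      · have : dist x ((1 - t) • w + t • x) = (1 - t) * dist x w := by
          rw [dist_eq_norm, dist_eq_norm]
          have : x - ((1 - t) • w + t • x) = (1 - t) • (x - w) := by module
          rw [this, norm_smul, Real.norm_of_nonneg (by linarith)]
        rw [this]
        have hp : 0 < dist x w := dist_pos.2 hxw
        have : (1 - t) * dist x w < dist x w := by nlinarith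
        nlinarith [sq_nonneg (a - z), mul_nonneg (by linarith : 0 ≤ 1 - t) hp.le]
  rcases le_or_gt b 0 with hb0 | hb0
  · exact neg a b hab hb0 h
  rcases le_or_gt 0 a with ha0 | ha0
  · exact nonneg a b hab ha0 h
  · exact neg a 0 ha0 le_rfl (nonneg 0 b hb0 le_rfl h).le

theorem pt_add_smul {n : ℕ} (φ : EucProd n →L[ℝ] ℝ) (u : EuclideanSpace ℝ (Fin n)) (v : ℝ) :
    φ (pt u v) = φ (pt u 0) + v * φ (pt 0 1) := by
  have : (pt u v : EucProd n) = pt u 0 + v • pt 0 1 := by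
    apply (WithLp.equiv 2 _).injective
    ext <;> simp [pt]
  rw [this, map_add, map_smul, smul_eq_mul]

theorem sep_point {E : Type*} [NormedAddCommGroup E] [NormedSpace ℝ E] (K : Set E)
    (h1 : Convex ℝ K) (h2 : IsClosed K) (x : E) (hx : x ∉ K) :
    ∃ (φ : E →L[ℝ] ℝ) (s : ℝ), φ x < s ∧ ∀ k ∈ K, s < φ k :=
  geometric_hahn_banach_point_closed h1 h2 hx

set_option maxHeartbeats 1000000 in
theorem exists_bad {n : ℕ} (K : Set (EucProd n)) (hKconv : Convex ℝ K) (hKcp : IsCompact K)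
    (x₀ : EuclideanSpace ℝ (Fin n)) (y₀ : ℝ) (hx₀ : pt x₀ y₀ ∈ K) (hy₀ : y₀ ≤ 0)
    (x₁ : EuclideanSpace ℝ (Fin n)) (y₁ y₂ : ℝ) (hy₁ : 0 < y₁) (hy₂ : y₁ < y₂)
    (h₁ : pt x₁ y₁ ∉ K) (h₂ : pt x₁ y₂ ∈ K) :
    ∃ f : EuclideanSpace ℝ (Fin n) → ℝ,
        (∀ x, 0 < f x) ∧ Continuous f ∧ ConvexOn ℝ Set.univ f ∧
        K ∩ epigraph f = ∅ ∧
        ∃ x, Gminus K (epigraph f) x < Gplus K (epigraph f) x := by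
  have hne : K.Nonempty := ⟨_, hx₀⟩
  obtain ⟨φ, s, hφ1, hφK⟩ := sep_point K hKconv hKcp.isClosed _ h₁
  set b := φ (pt 0 1) with hb
  have hφ2 := hφK _ h₂
  rw [pt_add_smul] at hφ1 hφ2
  have hbpos : 0 < b := by
    by_contra hbn
    push Not at hbn
    nlinarith
  obtain ⟨ψ, hψ⟩ : ∃ ψ : EuclideanSpace ℝ (Fin n) →ₗ[ℝ] ℝ,
      ∀ u, ψ u = - φ (pt u 0) / b := by
    refine ⟨⟨⟨fun u => - φ (pt u 0) / b, ?_⟩, ?_⟩, fun u => rfl⟩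
    · intro u v
      have : (pt (u + v) 0 : EucProd n) = pt u 0 + pt v 0 := by
        apply (WithLp.equiv 2 _).injective
        ext <;> simp [pt]
      rw [this, map_add]; ring
    · intro r v
      have : (pt (r • v) 0 : EucProd n) = r • pt v 0 := by
        apply (WithLp.equiv 2 _).injective
        ext <;> simp [pt]
      simp only [this, map_smul, smul_eq_mul, RingHom.id_apply]; ring
  have hψc : Continuous ψ := ψ.continuous_of_finiteDimensional
  have above : ∀ u v, pt u v ∈ K → y₁ + ψ u - ψ x₁ < v := by
    intro u v hk
    have h := hφK _ hk
    rw [pt_add_smul, ← hb] at h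
    have e1 : ψ u * b = - φ (pt u 0) := by rw [hψ]; field_simp
    have e2 : ψ x₁ * b = - φ (pt x₁ 0) := by rw [hψ]; field_simp
    have : (y₁ + ψ u - ψ x₁) * b < v * b := by linarith
    exact lt_of_mul_lt_mul_right this hbpos.le
  obtain ⟨k, hk, hmax⟩ := hKcp.exists_isMaxOn hne (hψc.comp continuous_fst').continuousOn
  obtain ⟨u, α, rfl⟩ := exists_pt k
  have hmax' : ∀ u' v', pt u' v' ∈ K → ψ u' ≤ ψ u := fun u' v' h => hmax h
  obtain ⟨k', hk', hH⟩ := hKcp.exists_isMaxOn hne (continuous_snd' (n := n)).continuousOn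
  obtain ⟨uH, H, rfl⟩ := exists_pt k'
  have hH' : ∀ u' v', pt u' v' ∈ K → v' ≤ H := fun u' v' h => hH h
  set δ := y₁ + ψ u - ψ x₁ with hδ
  have hδpos : 0 < δ := by have := hmax' _ _ h₂; linarith
  have hδα : δ < α := above u α hk
  have hnot : pt u δ ∉ K := fun h => lt_irrefl _ (above u δ h)
  have hdpos : 0 < infDist (pt u δ) K :=
    (hKcp.isClosed.notMem_iff_infDist_pos hne).1 hnot
  have hd01 : 0 < ψ (x₁ - x₀) := by
    have := above _ _ hx₀
    rw [map_sub]; linarith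
  obtain ⟨e, he⟩ : ∃ e, ψ e = 1 := by
    refine ⟨(ψ (x₁ - x₀))⁻¹ • (x₁ - x₀), ?_⟩
    rw [map_smul, smul_eq_mul, inv_mul_cancel₀ hd01.ne']
  set τ := infDist (pt u δ) K / (2 * (‖e‖ + 1)) with hτ
  have hτpos : 0 < τ := by positivity
  have hτe : τ * ‖e‖ < infDist (pt u δ) K := by
    have : τ * (2 * (‖e‖ + 1)) = infDist (pt u δ) K := div_mul_cancel₀ _ (by positivity)
    nlinarith [norm_nonneg e]
  have hHα : α ≤ H := hH' _ _ hk
  set M := H / τ with hM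
  have hMτ : M * τ = H := div_mul_cancel₀ _ hτpos.ne'
  have hMpos : 0 < M := div_pos (by linarith) hτpos
  set f : EuclideanSpace ℝ (Fin n) → ℝ := fun w => δ + M * max 0 (τ - (ψ w - ψ u)) with hfdef
  have hfδ : ∀ w, δ ≤ f w := fun w => by
    have : 0 ≤ M * max 0 (τ - (ψ w - ψ u)) := mul_nonneg hMpos.le (le_max_left _ _)
    simp only [hfdef]; linarith
  have hfc : Continuous f := by
    simp only [hfdef]; fun_prop
  have hdisj : K ∩ epigraph f = ∅ := by
    rw [Set.eq_empty_iff_forall_notMem]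
    rintro p ⟨hp1, hp2⟩
    obtain ⟨w, z, rfl⟩ := exists_pt p
    rw [mem_epi] at hp2
    have h1 := hmax' _ _ hp1
    have h2 := hH' _ _ hp1
    have h3 : M * τ ≤ M * max 0 (τ - (ψ w - ψ u)) :=
      mul_le_mul_of_nonneg_left (le_max_of_le_right (by linarith)) hMpos.le
    simp only [hfdef] at hp2
    linarith
  refine ⟨f, fun w => hδpos.trans_le (hfδ w), hfc, ?_, hdisj, u, ?_⟩
  · refine ⟨convex_univ, ?_⟩
    intro p _ q _ c d hc hd hcd
    simp only [hfdef, smul_eq_mul, map_add, map_smul]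
    have : max 0 (τ - (c * ψ p + d * ψ q - ψ u)) ≤
        c * max 0 (τ - (ψ p - ψ u)) + d * max 0 (τ - (ψ q - ψ u)) := by
      apply max_le
      · positivity
      · have h1 := mul_le_mul_of_nonneg_left (le_max_right 0 (τ - (ψ p - ψ u))) hc
        have h2 := mul_le_mul_of_nonneg_left (le_max_right 0 (τ - (ψ q - ψ u))) hd
        have hc' : c = 1 - d := by linarith
        subst hc'
        nlinarith
    have h2 := mul_le_mul_of_nonneg_left this hMpos.le
    have hc' : c = 1 - d := by linarith
    subst hc'
    nlinarith
  · set L := epigraph f with hL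
    have hLne : L.Nonempty := ⟨pt u (f u), le_refl (f u)⟩
    have hLcl : IsClosed L := isClosed_epi f hfc
    let g : ℝ → ℝ := fun y => infDist (pt u y) K - infDist (pt u y) L
    have hg : Continuous g :=
      ((continuous_infDist_pt K).comp (continuous_pt_right u)).sub
        ((continuous_infDist_pt L).comp (continuous_pt_right u))
    have gpos : ∀ y, f u ≤ y → 0 < g y := by
      intro y hy
      have hm : pt u y ∈ L := hy
      have : pt u y ∉ K := fun h => (Set.eq_empty_iff_forall_notMem.1 hdisj _) ⟨h, hm⟩
      have h1 := (hKcp.isClosed.notMem_iff_infDist_pos hne).1 this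
      simp only [g, infDist_zero_of_mem hm]; linarith
    have gα : g α < 0 := by
      have : pt u α ∉ L := fun h => (Set.eq_empty_iff_forall_notMem.1 hdisj _) ⟨hk, h⟩
      have h1 := (hLcl.notMem_iff_infDist_pos hLne).1 this
      simp only [g, infDist_zero_of_mem hk]; linarith
    have gδ : 0 < g δ := by
      have hm : pt (u + τ • e) δ ∈ L := by
        rw [hL, mem_epi]
        simp [hfdef, he]
      have h1 := infDist_le_dist_of_mem (x := pt u δ) hm
      have h2 : dist (pt u δ) (pt (u + τ • e) δ) ≤ τ * ‖e‖ := by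
        refine le_of_sq_le_sq ?_ (by positivity)
        rw [sq_dist_pt]
        simp [dist_eq_norm, norm_smul, abs_of_pos hτpos]
      simp only [g]; linarith
    have hαf : α < f u := by
      by_contra h
      push Not at h
      exact lt_asymm gα (gpos _ h)
    obtain ⟨z₁, hz₁, hgz₁⟩ := intermediate_value_Icc' hδα.le hg.continuousOn ⟨gα.le, gδ.le⟩
    obtain ⟨z₂, hz₂, hgz₂⟩ := intermediate_value_Icc hαf.le hg.continuousOn
      ⟨gα.le, (gpos _ le_rfl).le⟩
    have hlt : z₁ < z₂ := by
      rcases lt_or_eq_of_le (hz₁.2.trans hz₂.1) with h | h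
      · exact h
      · have : z₁ = α := le_antisymm hz₁.2 (h ▸ hz₂.1)
        rw [this] at hgz₁; linarith
    have hmem : ∀ y, g y = 0 → y ∈ {y : ℝ | infDist (pt u y) K = infDist (pt u y) L} :=
      fun y hy => sub_eq_zero.1 hy
    have hba : BddAbove {y : ℝ | infDist (pt u y) K = infDist (pt u y) L} := by
      refine ⟨f u, fun y hy => ?_⟩
      by_contra h
      push Not at h
      exact (gpos y h.le).ne' (sub_eq_zero.2 hy)
    have hbb : BddBelow {y : ℝ | infDist (pt u y) K = infDist (pt u y) L} := by
      refine ⟨min y₀ (- dist u x₀ ^ 2 / (2 * δ)), fun y hy => ?_⟩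
      by_contra h
      push Not at h
      obtain ⟨h1, h2⟩ := lt_min_iff.1 h
      obtain ⟨l, hl, hld⟩ := hLcl.exists_infDist_eq_dist hLne (pt u y)
      obtain ⟨w, z, rfl⟩ := exists_pt l
      have hz : δ ≤ z := (hfδ w).trans hl
      have h3 : dist (pt u y) (pt w z) ≤ dist (pt u y) (pt x₀ y₀) := by
        rw [← hld, ← hy]; exact infDist_le_dist_of_mem hx₀
      have h4 := pow_le_pow_left₀ dist_nonneg h3 2
      rw [sq_dist_pt, sq_dist_pt] at h4
      rw [lt_div_iff₀ (by positivity)] at h2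
      have h5 : (δ - y) ^ 2 ≤ (y - z) ^ 2 := by nlinarith
      have h6 : (y - y₀) ^ 2 ≤ y ^ 2 := by nlinarith
      nlinarith [sq_nonneg (dist u w)]
    exact lt_of_le_of_lt (csInf_le hbb (hmem _ hgz₁)) (hlt.trans_le (le_csSup hba (hmem _ hgz₂)))

theorem stmt10 {n : ℕ} (K : Set (EucProd n)) (hKconv : Convex ℝ K) (hKcp : IsCompact K)
    (x₀ : EuclideanSpace ℝ (Fin n)) (y₀ : ℝ) (hx₀ : pt x₀ y₀ ∈ K) (hy₀ : y₀ ≤ 0) :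
    (∀ f : EuclideanSpace ℝ (Fin n) → ℝ,
        (∀ x, 0 < f x) → Continuous f → ConvexOn ℝ Set.univ f →
        K ∩ epigraph f = ∅ →
        ∀ x, Gminus K (epigraph f) x = Gplus K (epigraph f) x) ↔
      ¬ ∃ (x₁ : EuclideanSpace ℝ (Fin n)) (y₁ y₂ : ℝ),
        0 < y₁ ∧ y₁ < y₂ ∧ pt x₁ y₁ ∉ K ∧ pt x₁ y₂ ∈ K := by
  constructor
  · rintro h ⟨x₁, y₁, y₂, hy₁, hy₂, h₁, h₂⟩
    obtain ⟨f, h3, h4, h5, h6, x, hx⟩ :=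
      exists_bad K hKconv hKcp x₀ y₀ hx₀ hy₀ x₁ y₁ y₂ hy₁ hy₂ h₁ h₂
    exact hx.ne (h f h3 h4 h5 h6 x)
  · intro h f hpos hf hc hd x
    have hne : K.Nonempty := ⟨_, hx₀⟩
    have hb' : ∀ (u : EuclideanSpace ℝ (Fin n)) (a b : ℝ),
        0 < a → a < b → pt u b ∈ K → pt u a ∈ K := by
      intro u a b ha hab hub
      by_contra hcon
      exact h ⟨u, a, b, ha, hab, hcon, hub⟩
    have hb : ∀ (u : EuclideanSpace ℝ (Fin n)) (a b : ℝ),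
        0 ≤ a → a < b → pt u b ∈ K → pt u a ∈ K := by
      intro u a b ha hab hub
      have hcl : IsClosed (pt u ⁻¹' K) := hKcp.isClosed.preimage (continuous_pt_right u)
      have hsub : Set.Ioo a b ⊆ pt u ⁻¹' K := fun c hc =>
        hb' u c b (ha.trans_lt hc.1) hc.2 hub
      have := hcl.closure_subset_iff.2 hsub
      rw [closure_Ioo hab.ne] at this
      exact this (Set.left_mem_Icc.2 hab.le)
    have hss : {y : ℝ | infDist (pt x y) K = infDist (pt x y) (epigraph f)}.Subsingleton := by
      intro a ha b hb2
      rcases lt_trichotomy a b with hab | hab | hab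
      · exact absurd ha (key_step K hKcp hne hb f hpos hf hc hd x a b hab hb2.le).ne
      · exact hab
      · exact absurd hb2 (key_step K hKcp hne hb f hpos hf hc hd x b a hab ha.le).ne
    unfold Gminus Gplus
    rcases hss.eq_empty_or_singleton with h0 | ⟨y, h0⟩
    · rw [h0]; simp
    · rw [h0]; simp

end
end
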